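/- arXiv:2601.00377 — 2 statements merged into one kernel-verified Lean document; each statement's English description precedes it below -/
import Mathlib

section
/- Let ν ≥ 0, let A₁, Â₁ ∈ ℝ^{m×r₁}, A₂, Â₂ ∈ ℝ^{m×r₂}, A₃, Â₃ ∈ ℝ^{p×r₃} all have orthonormal columns, and let v be a vector indexed by Fin r₁ × Fin r₃ × Fin r₂ with ‖v‖₂ ≤ ν. Then ‖((Â₁ ⊗ Â₃ ⊗ Â₂) − (A₁ ⊗ A₃ ⊗ A₂)) v‖₂ ≤ ν (‖Â₁ − A₁‖_F + ‖Â₂ − A₂‖_F + ‖Â₃ − A₃‖_F). -/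
open Matrix
open scoped Kronecker

/-- The Euclidean (ℓ²) norm of a real vector. -/
noncomputable def euclNorm {n : Type*} [Fintype n] (v : n → ℝ) : ℝ :=
  Real.sqrt (∑ i, (v i) ^ 2)

/-- The Frobenius norm of a real matrix. -/
noncomputable def frobNorm {m n : Type*} [Fintype m] [Fintype n] (A : Matrix m n ℝ) : ℝ :=
  Real.sqrt (∑ i, ∑ j, (A i j) ^ 2)

/-!
In the spectral norm `‖A ⊗ B‖ ≤ ‖A‖ ‖B‖`, and a matrix with orthonormal columns has norm at most
one. Replacing the factors one at a time,
`B₁ ⊗ B₃ ⊗ B₂ - A₁ ⊗ A₃ ⊗ A₂ =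
  (B₁ - A₁) ⊗ B₃ ⊗ B₂ + A₁ ⊗ (B₃ - A₃) ⊗ B₂ + A₁ ⊗ A₃ ⊗ (B₂ - A₂)`,
so each term is bounded by the spectral norm of one difference, hence by its Frobenius norm.
-/

theorem euclNorm_eq_norm_toLp {n : Type*} [Fintype n] (v : n → ℝ) :
    euclNorm v = ‖WithLp.toLp 2 v‖ := by
  simp [euclNorm, EuclideanSpace.norm_eq]

section Frobenius

open scoped Matrix.Norms.Frobenius

variable {m n : Type*} [Fintype m] [Fintype n]

theorem frobNorm_eq_norm (A : Matrix m n ℝ) : frobNorm A = ‖A‖ := by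
  simp [frobNorm, frobenius_norm_def, Real.sqrt_eq_rpow]

theorem norm_toLp_mulVec_le_frobenius_norm_mul {𝕜 : Type*} [RCLike 𝕜] (A : Matrix m n 𝕜)
    (x : n → 𝕜) :
    ‖WithLp.toLp 2 (A *ᵥ x)‖ ≤ ‖A‖ * ‖WithLp.toLp 2 x‖ := by
  simpa only [← replicateCol_mulVec, frobenius_norm_replicateCol] using
    frobenius_norm_mul A (replicateCol Unit x)

end Frobenius

section ProductIndex

variable {m n p q : Type*}

theorem kronecker_sub_kronecker {R : Type*} [NonUnitalNonAssocRing R] (A₁ B₁ : Matrix m n R)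
    (A₂ B₂ : Matrix p q R) :
    B₁ ⊗ₖ B₂ - A₁ ⊗ₖ A₂ = (B₁ - A₁) ⊗ₖ B₂ + A₁ ⊗ₖ (B₂ - A₂) := by
  ext
  simp only [Matrix.sub_apply, Matrix.add_apply, kroneckerMap_apply, sub_mul, mul_sub]
  abel

theorem kronecker_mulVec_apply {R : Type*} [NonUnitalSemiring R] [Fintype n] [Fintype q]
    (A : Matrix m n R) (B : Matrix p q R) (x : n × q → R) (i : m) (k : p) :
    ((A ⊗ₖ B) *ᵥ x) (i, k) = (A *ᵥ fun j ↦ (B *ᵥ fun l ↦ x (j, l)) k) i := by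
  simp only [mulVec, dotProduct, Fintype.sum_prod_type, kronecker_apply, Finset.mul_sum, mul_assoc]

variable {E : Type*} [SeminormedAddCommGroup E] [Fintype m] [Fintype n]

theorem norm_toLp_sq_eq_sum_left (x : m × n → E) :
    ‖WithLp.toLp 2 x‖ ^ 2 = ∑ i, ‖WithLp.toLp 2 fun j ↦ x (i, j)‖ ^ 2 := by
  simp only [PiLp.norm_sq_eq_of_L2, Fintype.sum_prod_type]

theorem norm_toLp_sq_eq_sum_right (x : m × n → E) :
    ‖WithLp.toLp 2 x‖ ^ 2 = ∑ j, ‖WithLp.toLp 2 fun i ↦ x (i, j)‖ ^ 2 := by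
  simp only [PiLp.norm_sq_eq_of_L2, Fintype.sum_prod_type_right]

end ProductIndex

section SpectralNorm

open scoped Matrix.Norms.L2Operator

variable {𝕜 m n p q : Type*} [RCLike 𝕜] [Fintype m] [Fintype n] [Fintype p] [Fintype q]
  [DecidableEq n] [DecidableEq q]

theorem norm_toLp_mulVec_le_l2_opNorm_mul (A : Matrix m n 𝕜) (x : n → 𝕜) :
    ‖WithLp.toLp 2 (A *ᵥ x)‖ ≤ ‖A‖ * ‖WithLp.toLp 2 x‖ :=
  l2_opNorm_mulVec A (WithLp.toLp 2 x)

theorem l2_opNorm_le_bound {A : Matrix m n 𝕜} {c : ℝ} (hc : 0 ≤ c)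
    (h : ∀ x : n → 𝕜, ‖WithLp.toLp 2 (A *ᵥ x)‖ ≤ c * ‖WithLp.toLp 2 x‖) : ‖A‖ ≤ c :=
  ContinuousLinearMap.opNorm_le_bound _ hc fun x ↦ h (WithLp.ofLp x)

theorem l2_opNorm_le_frobNorm (A : Matrix m n ℝ) : ‖A‖ ≤ frobNorm A :=
  l2_opNorm_le_bound (Real.sqrt_nonneg _) fun x ↦
    (norm_toLp_mulVec_le_frobenius_norm_mul A x).trans_eq (by rw [frobNorm_eq_norm])

theorem l2_opNorm_le_one_of_conjTranspose_mul_self {A : Matrix m n 𝕜} (hA : Aᴴ * A = 1) :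
    ‖A‖ ≤ 1 := by
  have norm_one_le : ‖(1 : Matrix n n 𝕜)‖ ≤ 1 := by
    rw [← diagonal_one, l2_opNorm_diagonal]
    exact (pi_norm_const_le 1).trans_eq norm_one
  rwa [← hA, l2_opNorm_conjTranspose_mul_self, ← sq, sq_le_one_iff₀ (norm_nonneg A)] at norm_one_le

theorem l2_opNorm_le_one_of_transpose_mul_self {A : Matrix m n ℝ} (hA : Aᵀ * A = 1) : ‖A‖ ≤ 1 :=
  l2_opNorm_le_one_of_conjTranspose_mul_self (by rwa [conjTranspose_eq_transpose_of_trivial])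

theorem l2_opNorm_kronecker_le (A : Matrix m n 𝕜) (B : Matrix p q 𝕜) :
    ‖A ⊗ₖ B‖ ≤ ‖A‖ * ‖B‖ := by
  refine l2_opNorm_le_bound (by positivity) fun x ↦ ?_
  refine le_of_sq_le_sq ?_ (by positivity)
  -- `B` acts on the rows of the array `x`, then `A` on the columns of the result `y`.
  let y (j : n) : p → 𝕜 := B *ᵥ fun l ↦ x (j, l)
  calc ‖WithLp.toLp 2 ((A ⊗ₖ B) *ᵥ x)‖ ^ 2
      = ∑ k, ‖WithLp.toLp 2 (A *ᵥ fun j ↦ y j k)‖ ^ 2 := by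
        simp only [norm_toLp_sq_eq_sum_right, kronecker_mulVec_apply, y]
    _ ≤ ∑ k, (‖A‖ * ‖WithLp.toLp 2 fun j ↦ y j k‖) ^ 2 := by
        gcongr; exact norm_toLp_mulVec_le_l2_opNorm_mul A _
    _ = ‖A‖ ^ 2 * ∑ j, ‖WithLp.toLp 2 (y j)‖ ^ 2 := by
        simp only [mul_pow, ← Finset.mul_sum]
        rw [← norm_toLp_sq_eq_sum_right fun jk : n × p ↦ y jk.1 jk.2, norm_toLp_sq_eq_sum_left]
    _ ≤ ‖A‖ ^ 2 * ∑ j, (‖B‖ * ‖WithLp.toLp 2 fun l ↦ x (j, l)‖) ^ 2 := by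
        gcongr; exact norm_toLp_mulVec_le_l2_opNorm_mul B _
    _ = (‖A‖ * ‖B‖ * ‖WithLp.toLp 2 x‖) ^ 2 := by
        simp only [mul_pow, ← Finset.mul_sum, norm_toLp_sq_eq_sum_left x, mul_assoc]

theorem l2_opNorm_kronecker_le_one {A : Matrix m n 𝕜} {B : Matrix p q 𝕜} (hA : ‖A‖ ≤ 1)
    (hB : ‖B‖ ≤ 1) : ‖A ⊗ₖ B‖ ≤ 1 :=
  (l2_opNorm_kronecker_le A B).trans (mul_le_one₀ hA (norm_nonneg B) hB)

theorem l2_opNorm_kronecker_sub_kronecker_le {A₁ B₁ : Matrix m n 𝕜} {A₂ B₂ : Matrix p q 𝕜}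
    (hA₁ : ‖A₁‖ ≤ 1) (hB₂ : ‖B₂‖ ≤ 1) :
    ‖B₁ ⊗ₖ B₂ - A₁ ⊗ₖ A₂‖ ≤ ‖B₁ - A₁‖ + ‖B₂ - A₂‖ := by
  calc ‖B₁ ⊗ₖ B₂ - A₁ ⊗ₖ A₂‖
      ≤ ‖(B₁ - A₁) ⊗ₖ B₂‖ + ‖A₁ ⊗ₖ (B₂ - A₂)‖ := by
        rw [kronecker_sub_kronecker]; exact norm_add_le _ _
    _ ≤ ‖B₁ - A₁‖ * ‖B₂‖ + ‖A₁‖ * ‖B₂ - A₂‖ :=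
        add_le_add (l2_opNorm_kronecker_le _ _) (l2_opNorm_kronecker_le _ _)
    _ ≤ ‖B₁ - A₁‖ + ‖B₂ - A₂‖ :=
        add_le_add (mul_le_of_le_one_right (norm_nonneg _) hB₂)
          (mul_le_of_le_one_left (norm_nonneg _) hA₁)

theorem kronecker_perturbation_linear_bound_general
    {m₁ m₂ m₃ n₁ n₂ n₃ : Type*} [Fintype m₁] [Fintype m₂] [Fintype m₃]
    [Fintype n₁] [Fintype n₂] [Fintype n₃] [DecidableEq n₁] [DecidableEq n₂] [DecidableEq n₃]
    {A₁ B₁ : Matrix m₁ n₁ 𝕜} {A₂ B₂ : Matrix m₂ n₂ 𝕜} {A₃ B₃ : Matrix m₃ n₃ 𝕜}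
    (hA₁ : ‖A₁‖ ≤ 1) (hA₃ : ‖A₃‖ ≤ 1) (hB₂ : ‖B₂‖ ≤ 1) (hB₃ : ‖B₃‖ ≤ 1)
    {ν : ℝ} {v : n₁ × n₃ × n₂ → 𝕜} (hv : ‖WithLp.toLp 2 v‖ ≤ ν) :
    ‖WithLp.toLp 2 ((B₁ ⊗ₖ (B₃ ⊗ₖ B₂) - A₁ ⊗ₖ (A₃ ⊗ₖ A₂)) *ᵥ v)‖
      ≤ ν * (‖B₁ - A₁‖ + ‖B₂ - A₂‖ + ‖B₃ - A₃‖) := by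
  have opNorm_sub_le : ‖B₁ ⊗ₖ (B₃ ⊗ₖ B₂) - A₁ ⊗ₖ (A₃ ⊗ₖ A₂)‖
      ≤ ‖B₁ - A₁‖ + ‖B₂ - A₂‖ + ‖B₃ - A₃‖ :=
    calc ‖B₁ ⊗ₖ (B₃ ⊗ₖ B₂) - A₁ ⊗ₖ (A₃ ⊗ₖ A₂)‖
        ≤ ‖B₁ - A₁‖ + ‖B₃ ⊗ₖ B₂ - A₃ ⊗ₖ A₂‖ :=
          l2_opNorm_kronecker_sub_kronecker_le hA₁ (l2_opNorm_kronecker_le_one hB₃ hB₂)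
      _ ≤ ‖B₁ - A₁‖ + (‖B₃ - A₃‖ + ‖B₂ - A₂‖) := by
          gcongr; exact l2_opNorm_kronecker_sub_kronecker_le hA₃ hB₂
      _ = ‖B₁ - A₁‖ + ‖B₂ - A₂‖ + ‖B₃ - A₃‖ := by ring
  rw [mul_comm]
  exact (norm_toLp_mulVec_le_l2_opNorm_mul _ v).trans (by gcongr)

end SpectralNorm

/-- Linear Kronecker perturbation bound: if all six factor matrices have
orthonormal columns and `‖v‖₂ ≤ ν`, then
`‖((Â₁ ⊗ Â₃ ⊗ Â₂) − (A₁ ⊗ A₃ ⊗ A₂)) v‖₂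
  ≤ ν (‖Â₁ − A₁‖_F + ‖Â₂ − A₂‖_F + ‖Â₃ − A₃‖_F)`. -/
theorem kronecker_perturbation_linear_bound
    (m p r₁ r₂ r₃ : ℕ) (ν : ℝ) (hν : 0 ≤ ν)
    (A₁ Ahat₁ : Matrix (Fin m) (Fin r₁) ℝ)
    (A₂ Ahat₂ : Matrix (Fin m) (Fin r₂) ℝ)
    (A₃ Ahat₃ : Matrix (Fin p) (Fin r₃) ℝ)
    (hA₁ : A₁ᵀ * A₁ = 1) (hAhat₁ : Ahat₁ᵀ * Ahat₁ = 1)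
    (hA₂ : A₂ᵀ * A₂ = 1) (hAhat₂ : Ahat₂ᵀ * Ahat₂ = 1)
    (hA₃ : A₃ᵀ * A₃ = 1) (hAhat₃ : Ahat₃ᵀ * Ahat₃ = 1)
    (v : Fin r₁ × Fin r₃ × Fin r₂ → ℝ) (hv : euclNorm v ≤ ν) :
    euclNorm (((Ahat₁ ⊗ₖ (Ahat₃ ⊗ₖ Ahat₂)) - (A₁ ⊗ₖ (A₃ ⊗ₖ A₂))).mulVec v)
      ≤ ν * (frobNorm (Ahat₁ - A₁) + frobNorm (Ahat₂ - A₂) + frobNorm (Ahat₃ - A₃)) := by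
  rw [euclNorm_eq_norm_toLp] at hv ⊢
  exact (kronecker_perturbation_linear_bound_general (l2_opNorm_le_one_of_transpose_mul_self hA₁)
    (l2_opNorm_le_one_of_transpose_mul_self hA₃) (l2_opNorm_le_one_of_transpose_mul_self hAhat₂)
    (l2_opNorm_le_one_of_transpose_mul_self hAhat₃) hv).trans
      (by gcongr <;> exact l2_opNorm_le_frobNorm _)
end

section
/- Let T ≥ 1 and β > 0, and for i = 1, 2, 3 let α_i > 0 and λ_i > 0. Let Z ∈ ℝ^{N×d}, A, Â ∈ ℝ^{d×q}, g, ĝ ∈ ℝ^q, e ∈ ℝ^N, and set y = Z(A g) + e and Δ̂ = Â ĝ − A g. For i = 1, 2, 3 let L_i ∈ ℝ^{m_i×m_i} be symmetric and A_i, Â_i ∈ ℝ^{m_i×r_i}, with ΔA_i = Â_i − A_i. Let S = { j : g_j ≠ 0 } be the support of g. Assume: (1) optimality: (1/(2T))‖y − Z(Â ĝ)‖₂² + β‖ĝ‖₁ + Σ_i α_i tr(Â_iᵀ L_i Â_i) ≤ (1/(2T))‖y − Z(A g)‖₂² + β‖g‖₁ + Σ_i α_i tr(A_iᵀ L_i A_i);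 (2) for each i, tr(ΔA_iᵀ L_i ΔA_i) ≥ (λ_i/2)‖ΔA_i‖_F²; (3) (1/T)⟨Z Δ̂, e⟩ ≤ β‖Δ̂‖₁; (4) (1/T)‖Z Δ̂‖₂² ≥ (ϖ/2)‖Δ̂‖₂² for some ϖ > 0. Then (ϖ/4)‖Δ̂‖₂² + Σ_{i=1}^3 (α_i λ_i/2)‖ΔA_i‖_F² ≤ β‖Δ̂‖₁ + Σ_{i=1}^3 2 α_i ‖L_i A_i‖_F ‖ΔA_i‖_F + β Σ_{j∈S} |ĝ_j − g_j|. -/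
open Matrix

/-! The excess squared loss of the estimator is `‖Z Δ‖² - 2⟨Z Δ, e⟩`, so optimality bounds `‖Z Δ‖²`
by a noise term, controlled by the deviation bound, plus differences of penalties. The `ℓ¹`
difference lives on the support of `g`, since off the support `|g j| - |ĝ j| ≤ 0`. Each trace
penalty is a quadratic form: expanded around the truth, its second-order part is bounded below by
hypothesis and its first-order part `2 tr(Dᵀ L F)` by Cauchy–Schwarz for the Frobenius norm. -/

theorem euclNorm_sq {n : Type*} [Fintype n] (v : n → ℝ) : euclNorm v ^ 2 = v ⬝ᵥ v := by
  rw [euclNorm, Real.sq_sqrt (Finset.sum_nonneg fun i _ => sq_nonneg (v i))]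
  simp only [dotProduct, sq]

theorem euclNorm_sub_sq {n : Type*} [Fintype n] (v w : n → ℝ) :
    euclNorm (v - w) ^ 2 = euclNorm v ^ 2 - 2 * (v ⬝ᵥ w) + euclNorm w ^ 2 := by
  simp only [euclNorm_sq, sub_dotProduct, dotProduct_sub, dotProduct_comm w v]
  ring

theorem abs_dotProduct_le_euclNorm_mul_euclNorm {n : Type*} [Fintype n] (v w : n → ℝ) :
    |v ⬝ᵥ w| ≤ euclNorm v * euclNorm w := by
  rw [euclNorm, euclNorm, ← Real.sqrt_mul (Finset.sum_nonneg fun i _ => sq_nonneg (v i))]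
  exact Real.abs_le_sqrt (Finset.sum_mul_sq_le_sq_mul_sq _ v w)

theorem euclNorm_vec {m n : Type*} [Fintype m] [Fintype n] (A : Matrix m n ℝ) :
    euclNorm (vec A) = frobNorm A := by
  simp only [euclNorm, frobNorm, vec, Fintype.sum_prod_type_right]

theorem abs_trace_transpose_mul_le_frobNorm_mul_frobNorm {m n : Type*} [Fintype m] [Fintype n]
    (A B : Matrix m n ℝ) : |trace (Aᵀ * B)| ≤ frobNorm A * frobNorm B := by
  simpa only [vec_dotProduct_vec, euclNorm_vec] using
    abs_dotProduct_le_euclNorm_mul_euclNorm (vec A) (vec B)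

theorem trace_transpose_mul_mul_add {R m n : Type*} [CommSemiring R] [Fintype m] [Fintype n]
    {L : Matrix m m R} (hL : L.IsSymm) (F D : Matrix m n R) :
    trace ((F + D)ᵀ * L * (F + D)) =
      trace (Fᵀ * L * F) + 2 * trace (Dᵀ * (L * F)) + trace (Dᵀ * L * D) := by
  have cross : trace (Fᵀ * L * D) = trace (Dᵀ * L * F) := by
    rw [← trace_transpose]
    simp only [transpose_mul, transpose_transpose, hL.eq, Matrix.mul_assoc]
  simp only [transpose_add, Matrix.add_mul, Matrix.mul_add, trace_add, cross,
    ← Matrix.mul_assoc]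
  ring

theorem trace_transpose_mul_mul_add_sub_le {m n : Type*} [Fintype m] [Fintype n]
    {L : Matrix m m ℝ} (hL : L.IsSymm) (F G : Matrix m n ℝ) :
    trace (Fᵀ * L * F) + trace ((G - F)ᵀ * L * (G - F)) ≤
      trace (Gᵀ * L * G) + 2 * (frobNorm (L * F) * frobNorm (G - F)) := by
  have expansion := trace_transpose_mul_mul_add hL F (G - F)
  rw [add_sub_cancel] at expansion
  have cauchy_schwarz := neg_le_of_abs_le
    (abs_trace_transpose_mul_le_frobNorm_mul_frobNorm (G - F) (L * F))
  linarith

theorem sum_abs_le_sum_abs_add_sum_abs_sub {n R : Type*} [Fintype n] [AddCommGroup R]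
    [LinearOrder R] [IsOrderedAddMonoid R] (s : Finset n) {g : n → R}
    (hg : ∀ j ∉ s, g j = 0) (h : n → R) :
    ∑ j, |g j| ≤ ∑ j, |h j| + ∑ j ∈ s, |h j - g j| := by
  have restrict : ∑ j, |g j| = ∑ j ∈ s, |g j| :=
    (Finset.sum_subset s.subset_univ fun j _ hj => by rw [hg j hj, abs_zero]).symm
  calc ∑ j, |g j| = ∑ j ∈ s, |g j| := restrict
    _ ≤ ∑ j ∈ s, (|h j| + |h j - g j|) := Finset.sum_le_sum fun j _ => by
        simpa only [sub_sub_cancel] using abs_sub (h j) (h j - g j)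
    _ = ∑ j ∈ s, |h j| + ∑ j ∈ s, |h j - g j| := Finset.sum_add_distrib
    _ ≤ ∑ j, |h j| + ∑ j ∈ s, |h j - g j| := by
        gcongr
        exact s.subset_univ

theorem basic_inequality_general {ι N d q : Type*} [Fintype ι] [Fintype N] [Fintype d] [Fintype q]
    {m r : ι → Type*} [∀ i, Fintype (m i)] [∀ i, Fintype (r i)]
    {T β ϖ : ℝ} (hT : T ≠ 0) (hβ : 0 ≤ β) {α lam : ι → ℝ} (hα : ∀ i, 0 ≤ α i)
    {Z : Matrix N d ℝ} {θ θhat Δ : d → ℝ} {g ghat : q → ℝ} {e y : N → ℝ}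
    {L : ∀ i, Matrix (m i) (m i) ℝ} (hL : ∀ i, (L i).IsSymm)
    {F Fhat : ∀ i, Matrix (m i) (r i) ℝ}
    (hy : y = Z *ᵥ θ + e) (hΔ : Δ = θhat - θ)
    (hopt : 1 / (2 * T) * euclNorm (y - Z *ᵥ θhat) ^ 2 + β * (∑ j, |ghat j|)
              + ∑ i, α i * trace ((Fhat i)ᵀ * L i * Fhat i)
            ≤ 1 / (2 * T) * euclNorm (y - Z *ᵥ θ) ^ 2 + β * (∑ j, |g j|)
              + ∑ i, α i * trace ((F i)ᵀ * L i * F i))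
    (hgraph : ∀ i, lam i / 2 * frobNorm (Fhat i - F i) ^ 2
                ≤ trace ((Fhat i - F i)ᵀ * L i * (Fhat i - F i)))
    (hdev : T⁻¹ * (Z *ᵥ Δ ⬝ᵥ e) ≤ β * ∑ j, |Δ j|)
    (hre : ϖ / 2 * euclNorm Δ ^ 2 ≤ T⁻¹ * euclNorm (Z *ᵥ Δ) ^ 2) :
    ϖ / 4 * euclNorm Δ ^ 2 + ∑ i, α i * lam i / 2 * frobNorm (Fhat i - F i) ^ 2
      ≤ β * (∑ j, |Δ j|)
        + (∑ i, 2 * α i * frobNorm (L i * F i) * frobNorm (Fhat i - F i))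
        + β * ∑ j ∈ Finset.univ.filter (fun j => g j ≠ 0), |ghat j - g j| := by
  have residual : y - Z *ᵥ θ = e := by rw [hy, add_sub_cancel_left]
  have residual_hat : y - Z *ᵥ θhat = e - Z *ᵥ Δ := by rw [hy, hΔ, mulVec_sub]; abel
  have excess_loss : 1 / (2 * T) * euclNorm (y - Z *ᵥ θhat) ^ 2 =
      1 / (2 * T) * euclNorm (y - Z *ᵥ θ) ^ 2
        + T⁻¹ * euclNorm (Z *ᵥ Δ) ^ 2 / 2 - T⁻¹ * (Z *ᵥ Δ ⬝ᵥ e) := by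
    rw [residual, residual_hat, euclNorm_sub_sq, dotProduct_comm]
    field_simp
    ring
  have sparsity : β * ∑ j, |g j| ≤ β * (∑ j, |ghat j|
      + ∑ j ∈ Finset.univ.filter (fun j => g j ≠ 0), |ghat j - g j|) :=
    mul_le_mul_of_nonneg_left (sum_abs_le_sum_abs_add_sum_abs_sub _ (by simp) ghat) hβ
  have graph : ∑ i, α i * trace ((F i)ᵀ * L i * F i)
        + ∑ i, α i * lam i / 2 * frobNorm (Fhat i - F i) ^ 2
      ≤ ∑ i, α i * trace ((Fhat i)ᵀ * L i * Fhat i)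
        + ∑ i, 2 * α i * frobNorm (L i * F i) * frobNorm (Fhat i - F i) := by
    simp only [← Finset.sum_add_distrib]
    refine Finset.sum_le_sum fun i _ => ?_
    have penalty := (add_le_add_right (hgraph i) _).trans
      (trace_transpose_mul_mul_add_sub_le (hL i) (F i) (Fhat i))
    linarith [mul_le_mul_of_nonneg_left penalty (hα i)]
  linarith

/-- Deterministic basic inequality in the proof of the main error bound:
optimality of the penalized estimator, the graph-regularization lower bound,
the deviation bound and the restricted eigenvalue condition together imply
`(ϖ/4)‖Δ̂‖₂² + Σᵢ (αᵢλᵢ/2)‖ΔAᵢ‖_F²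
  ≤ β‖Δ̂‖₁ + Σᵢ 2αᵢ‖Lᵢ Aᵢ‖_F ‖ΔAᵢ‖_F + β Σ_{j∈S} |ĝⱼ − gⱼ|`. -/
theorem basic_inequality
    (T : ℕ) (hT : 1 ≤ T) (β : ℝ) (hβ : 0 < β)
    (α lam : Fin 3 → ℝ) (hα : ∀ i, 0 < α i) (hlam : ∀ i, 0 < lam i)
    (N d q : ℕ)
    (Z : Matrix (Fin N) (Fin d) ℝ)
    (A Ahat : Matrix (Fin d) (Fin q) ℝ)
    (g ghat : Fin q → ℝ) (e : Fin N → ℝ)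
    (mdim rdim : Fin 3 → ℕ)
    (L : ∀ i : Fin 3, Matrix (Fin (mdim i)) (Fin (mdim i)) ℝ)
    (hLsymm : ∀ i, (L i)ᵀ = L i)
    (F Fhat : ∀ i : Fin 3, Matrix (Fin (mdim i)) (Fin (rdim i)) ℝ)
    (ϖ : ℝ) (hϖ : 0 < ϖ)
    (y : Fin N → ℝ) (hy : y = Z.mulVec (A.mulVec g) + e)
    (Δ : Fin d → ℝ) (hΔ : Δ = Ahat.mulVec ghat - A.mulVec g)
    -- (1) optimality of the penalized estimator
    (hopt : (1 / (2 * (T : ℝ))) * euclNorm (y - Z.mulVec (Ahat.mulVec ghat)) ^ 2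
              + β * (∑ j, |ghat j|)
              + ∑ i, α i * Matrix.trace ((Fhat i)ᵀ * L i * Fhat i)
            ≤ (1 / (2 * (T : ℝ))) * euclNorm (y - Z.mulVec (A.mulVec g)) ^ 2
              + β * (∑ j, |g j|)
              + ∑ i, α i * Matrix.trace ((F i)ᵀ * L i * F i))
    -- (2) graph-regularization lower bound
    (hgraph : ∀ i, lam i / 2 * frobNorm (Fhat i - F i) ^ 2
                ≤ Matrix.trace ((Fhat i - F i)ᵀ * L i * (Fhat i - F i)))
    -- (3) deviation bound
    (hdev : (T : ℝ)⁻¹ * (Z.mulVec Δ ⬝ᵥ e) ≤ β * ∑ j, |Δ j|)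
    -- (4) restricted eigenvalue condition
    (hre : ϖ / 2 * euclNorm Δ ^ 2 ≤ (T : ℝ)⁻¹ * euclNorm (Z.mulVec Δ) ^ 2) :
    ϖ / 4 * euclNorm Δ ^ 2 + ∑ i, α i * lam i / 2 * frobNorm (Fhat i - F i) ^ 2
      ≤ β * (∑ j, |Δ j|)
        + (∑ i, 2 * α i * frobNorm (L i * F i) * frobNorm (Fhat i - F i))
        + β * ∑ j ∈ Finset.univ.filter (fun j => g j ≠ 0), |ghat j - g j| :=
  basic_inequality_general (Nat.cast_ne_zero.mpr (Nat.one_le_iff_ne_zero.mp hT)) hβ.le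
    (fun i => (hα i).le) hLsymm hy hΔ hopt hgraph hdev hre
end
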